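/- Let f be a smooth nowhere-vanishing real function of one variable such that x·f′(x)/f(x) is non-constant, and let M be a nonempty connected open subset of {(x,y) ∈ ℝ² : x·f′(x)/f(x) ≠ 1/2, x ≠ 0} on which x·f′(x)/f(x) is non-constant. Define metrics h and h̃ on M by their inverse matrices h⁻¹(x,y) = [[0, x],[x, y]] and h̃⁻¹(x,y) = [[0, f(x)],[f(x), f(x)]] (in the coordinates (x,y)), and let E = x·∂_x + y·∂_y. Then: (i) (h, h̃) is a compatible pair of metrics on M and the triple (h, h̃, E) is regular; (ii) L_E h = h and L_E h̃ = (2 − x·f′/f)·h̃; (iii) the associated multiplication • on 1-forms satisfies dx•dx = 0, dx•dy = dx, and dy•dy = dy; and (iv) L_E(•) = (1 − x·f′/f)·• on tangent vectors. In particular, E rescales the multiplication • even though D̃ − D = 1 − x·f′/f is non-constant, so the conclusion of the two-metric rescaling theorem (valid in dimension at least three) fails in dimension two. -/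

import Mathlib

open scoped BigOperators

noncomputable section

/-- Points of ℝⁿ. -/
abbrev Pt (n : ℕ) := Fin n → ℝ
/-- Vector fields (globally defined functions; conditions are imposed on an open set). -/
abbrev VF (n : ℕ) := Pt n → Fin n → ℝ
/-- 1-forms. -/
abbrev OneForm (n : ℕ) := Pt n → Fin n → ℝ
/-- Metrics: smooth maps into symmetric invertible matrices. -/
abbrev Met (n : ℕ) := Pt n → Matrix (Fin n) (Fin n) ℝ
/-- (1,2)-tensor fields (multiplications on tangent vectors): components `c t k i j` = c^k_{ij}(t). -/
abbrev Mul2 (n : ℕ) := Pt n → Fin n → Fin n → Fin n → ℝ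

variable {n : ℕ}

/-- Partial derivative ∂ᵢ f (t). -/
def pder (i : Fin n) (f : Pt n → ℝ) (t : Pt n) : ℝ :=
  fderiv ℝ f t (Pi.single i 1)

/-- Smoothness (on `U`) of a vector field or a 1-form. -/
def SmoothVF (U : Set (Pt n)) (X : VF n) : Prop :=
  ∀ k, ContDiffOn ℝ (⊤ : ℕ∞) (fun t => X t k) U

def SmoothMet (U : Set (Pt n)) (g : Met n) : Prop :=
  ∀ i j, ContDiffOn ℝ (⊤ : ℕ∞) (fun t => g t i j) U

def SmoothMul2 (U : Set (Pt n)) (c : Mul2 n) : Prop :=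
  ∀ k i j, ContDiffOn ℝ (⊤ : ℕ∞) (fun t => c t k i j) U

/-- `g` is a (pseudo-Riemannian) metric on `U`: smooth, symmetric, invertible. -/
def IsMetricOn (U : Set (Pt n)) (g : Met n) : Prop :=
  SmoothMet U g ∧ ∀ t ∈ U, (g t).IsSymm ∧ IsUnit (g t)

/-- The 1-form g(X). -/
def mdown (g : Met n) (X : VF n) : OneForm n := fun t k => ∑ j, g t k j * X t j
/-- The vector field g*α. -/
def mup (g : Met n) (α : OneForm n) : VF n := fun t k => ∑ j, (g t)⁻¹ k j * α t j
/-- g*(α, β). -/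
def mup2 (g : Met n) (α β : OneForm n) (t : Pt n) : ℝ :=
  ∑ i, ∑ j, (g t)⁻¹ i j * α t i * β t j
/-- g(X, Y). -/
def mdown2 (g : Met n) (X Y : VF n) (t : Pt n) : ℝ :=
  ∑ i, ∑ j, g t i j * X t i * Y t j

/-- Christoffel symbols Γ(g)^k_{ij}(t). -/
def chr (g : Met n) (k i j : Fin n) (t : Pt n) : ℝ :=
  (1/2) * ∑ l, (g t)⁻¹ k l *
    (pder i (fun s => g s j l) t + pder j (fun s => g s i l) t - pder l (fun s => g s i j) t)

/-- Levi-Civita covariant derivative ∇^g_X Y of a vector field. -/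
def covV (g : Met n) (X Y : VF n) : VF n :=
  fun t k => ∑ i, X t i * (pder i (fun s => Y s k) t + ∑ m, chr g k i m t * Y t m)

/-- Levi-Civita covariant derivative ∇^g_X α of a 1-form. -/
def covF (g : Met n) (X : VF n) (α : OneForm n) : OneForm n :=
  fun t k => ∑ i, X t i * (pder i (fun s => α s k) t - ∑ m, chr g m i k t * α t m)

/-- Lie bracket [X, Y]. -/
def vbr (X Y : VF n) : VF n :=
  fun t k => ∑ i, (X t i * pder i (fun s => Y s k) t - Y t i * pder i (fun s => X s k) t)

/-- Curvature R(g)_{X,Y} Z = ∇_X ∇_Y Z − ∇_Y ∇_X Z − ∇_{[X,Y]} Z. -/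
def curvV (g : Met n) (X Y Z : VF n) : VF n :=
  fun t k => covV g X (covV g Y Z) t k - covV g Y (covV g X Z) t k
    - covV g (vbr X Y) Z t k

/-- Curvature acting on 1-forms: (R(g)_{X,Y} α)(Z) = −α(R(g)_{X,Y} Z). -/
def curvF (g : Met n) (X Y : VF n) (α : OneForm n) : OneForm n :=
  fun t k => - ∑ m, α t m * curvV g X Y (fun _ => Pi.single k 1) t m

/-- `g` is flat on `U`: the curvature tensor vanishes identically. -/
def FlatOn (U : Set (Pt n)) (g : Met n) : Prop :=
  ∀ X Y Z : VF n, SmoothVF U X → SmoothVF U Y → SmoothVF U Z →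
    ∀ t ∈ U, ∀ k, curvV g X Y Z t k = 0

/-- `g` has constant sectional curvature `s` on `U`. -/
def ConstSecCurv (U : Set (Pt n)) (g : Met n) (s : ℝ) : Prop :=
  ∀ X Y : VF n, SmoothVF U X → SmoothVF U Y → ∀ t ∈ U,
    mdown2 g (curvV g X Y Y) X t
      = s * (mdown2 g X X t * mdown2 g Y Y t - (mdown2 g X Y t) ^ 2)

/-- The metric g_λ of the pencil: its inverse matrix is g⁻¹ + λ g̃⁻¹. -/
def pencil (g g' : Met n) (lam : ℝ) : Met n :=
  fun t => ((g t)⁻¹ + lam • (g' t)⁻¹)⁻¹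

/-- Almost compatibility of the pair (g, g̃) on `U`. -/
def AlmostCompatible (U : Set (Pt n)) (g g' : Met n) : Prop :=
  ∀ lam : ℝ, (∀ t ∈ U, IsUnit ((g t)⁻¹ + lam • (g' t)⁻¹)) →
    ∀ X : VF n, SmoothVF U X → ∀ α : OneForm n, SmoothVF U α →
      ∀ t ∈ U, ∀ k,
        mup (pencil g g' lam) (covF (pencil g g' lam) X α) t k
          = mup g (covF g X α) t k + lam * mup g' (covF g' X α) t k

/-- Compatibility of the pair (g, g̃) on `U`. -/
def Compatible (U : Set (Pt n)) (g g' : Met n) : Prop :=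
  AlmostCompatible U g g' ∧
  ∀ lam : ℝ, (∀ t ∈ U, IsUnit ((g t)⁻¹ + lam • (g' t)⁻¹)) →
    ∀ X Y : VF n, SmoothVF U X → SmoothVF U Y →
      ∀ α : OneForm n, SmoothVF U α →
        ∀ t ∈ U, ∀ k,
          mup (pencil g g' lam) (curvF (pencil g g' lam) X Y α) t k
            = mup g (curvF g X Y α) t k + lam * mup g' (curvF g' X Y α) t k

/-- The multiplication α ∘ β = ∇^g_{g*α} β − ∇^{g̃}_{g*α} β on 1-forms. -/
def circM (g g' : Met n) (α β : OneForm n) : OneForm n :=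
  fun t k => covF g (mup g α) β t k - covF g' (mup g α) β t k

/-- The endomorphism T(u) = g(E) ∘ u of 1-forms, as a pointwise matrix
(`∘` being tensorial in its second argument). -/
def Tmat (g g' : Met n) (E : VF n) (t : Pt n) : Matrix (Fin n) (Fin n) ℝ :=
  Matrix.of fun k m => circM g g' (mdown g E) (fun _ => Pi.single m 1) t k

/-- The triple (g, g̃, E) is regular on `U` if T is invertible at every point. -/
def RegularTriple (U : Set (Pt n)) (g g' : Met n) (E : VF n) : Prop :=
  ∀ t ∈ U, IsUnit (Tmat g g' E t)

/-- T⁻¹(v). -/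
def TinvF (g g' : Met n) (E : VF n) (v : OneForm n) : OneForm n :=
  fun t k => ∑ m, (Tmat g g' E t)⁻¹ k m * v t m

/-- The multiplication u • v = u ∘ T⁻¹(v) on 1-forms. -/
def bulF (g g' : Met n) (E : VF n) (u v : OneForm n) : OneForm n :=
  circM g g' u (TinvF g g' E v)

/-- The multiplication • on vector fields: X • Y = g̃*((g̃X) • (g̃Y)). -/
def bulV (g g' : Met n) (E : VF n) (X Y : VF n) : VF n :=
  mup g' (bulF g g' E (mdown g' X) (mdown g' Y))

/-- The multiplication • associated to the regular triple (g, g̃, E), as a (1,2)-tensor. -/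
def bulMul (g g' : Met n) (E : VF n) : Mul2 n :=
  fun t k i j => bulV g g' E (fun _ => Pi.single i 1) (fun _ => Pi.single j 1) t k

/-- Applying a (1,2)-tensor to vector fields. -/
def mapp (c : Mul2 n) (X Y : VF n) : VF n :=
  fun t k => ∑ i, ∑ j, c t k i j * X t i * Y t j

/-- Transporting a multiplication on tangent vectors to a multiplication
on 1-forms via the metric: u • v := g̃((g̃*u) • (g̃*v)). -/
def formMul (g' : Met n) (c : Mul2 n) (u v : OneForm n) : OneForm n :=
  mdown g' (mapp c (mup g' u) (mup g' v))

/-- Lie derivative of a function. -/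
def lieFun (E : VF n) (φ : Pt n → ℝ) : Pt n → ℝ :=
  fun t => ∑ i, E t i * pder i φ t

/-- Lie derivative of a 1-form: (L_E α)(X) = E(α(X)) − α([E,X]). -/
def lieOne (E : VF n) (α : OneForm n) : OneForm n :=
  fun t k => (∑ i, E t i * pder i (fun s => α s k) t) + ∑ i, α t i * pder k (fun s => E s i) t

/-- Lie derivative of a metric: (L_E g)(X,Y) = E(g(X,Y)) − g([E,X],Y) − g(X,[E,Y]). -/
def lieMet (E : VF n) (g : Met n) : Met n := fun t =>
  Matrix.of fun k j =>
    (∑ i, E t i * pder i (fun s => g s k j) t)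
    + (∑ i, g t i j * pder k (fun s => E s i) t)
    + (∑ i, g t k i * pder j (fun s => E s i) t)

/-- Lie derivative of a multiplication ((1,2)-tensor):
(L_E c)(u,v) = L_E(c(u,v)) − c(L_E u, v) − c(u, L_E v), componentwise. -/
def lieMul (E : VF n) (c : Mul2 n) : Mul2 n :=
  fun t k i j =>
    vbr E (mapp c (fun _ => Pi.single i 1) (fun _ => Pi.single j 1)) t k
    - mapp c (vbr E (fun _ => Pi.single i 1)) (fun _ => Pi.single j 1) t k
    - mapp c (fun _ => Pi.single i 1) (vbr E (fun _ => Pi.single j 1)) t k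

/-- Lie derivative of a multiplication on 1-forms (applied to the pencil multiplication ∘). -/
def lieCirc (E : VF n) (g g' : Met n) (u v : OneForm n) : OneForm n :=
  fun t k => lieOne E (circM g g' u v) t k - circM g g' (lieOne E u) v t k
    - circM g g' u (lieOne E v) t k

/-- ∇^g_X(•)(Y,Z) := ∇^g_X(Y•Z) − (∇^g_X Y)•Z − Y•(∇^g_X Z), for a multiplication c. -/
def covMul (g : Met n) (c : Mul2 n) (X Y Z : VF n) : VF n :=
  fun t k => covV g X (mapp c Y Z) t k - mapp c (covV g X Y) Z t k
    - mapp c Y (covV g X Z) t k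

/-- The (4,0)-tensor ∇^g(•)(X,Y,Z,V) := g(∇^g_X(•)(Y,Z), V). -/
def covMul4 (g : Met n) (c : Mul2 n) (X Y Z V : VF n) (t : Pt n) : ℝ :=
  mdown2 g (covMul g c X Y Z) V t

/-- Total symmetry of the (4,0)-tensor ∇^g(•) (the F-manifold condition). -/
def TotSym (U : Set (Pt n)) (g : Met n) (c : Mul2 n) : Prop :=
  ∀ X Y Z V : VF n, SmoothVF U X → SmoothVF U Y → SmoothVF U Z → SmoothVF U V →
    ∀ t ∈ U,
      covMul4 g c X Y Z V t = covMul4 g c Y X Z V t ∧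
      covMul4 g c X Y Z V t = covMul4 g c X Z Y V t ∧
      covMul4 g c X Y Z V t = covMul4 g c X Y V Z t

/-- Weak F-manifold structure (U, •, g̃, E), with identity `e`, •-inverse `Einv` of E,
and rescaling functions `Dt` (for the metric) and `k` (for the multiplication). -/
structure IsWeakF (U : Set (Pt n)) (c : Mul2 n) (g' : Met n) (E e Einv : VF n)
    (Dt k : Pt n → ℝ) : Prop where
  met : IsMetricOn U g'
  smooth_c : SmoothMul2 U c
  smooth_E : SmoothVF U E
  smooth_e : SmoothVF U e
  smooth_Einv : SmoothVF U Einv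
  smooth_Dt : ContDiffOn ℝ (⊤ : ℕ∞) Dt U
  smooth_k : ContDiffOn ℝ (⊤ : ℕ∞) k U
  comm : ∀ t ∈ U, ∀ a i j, c t a i j = c t a j i
  assoc : ∀ t ∈ U, ∀ a x y z, (∑ m, c t a m z * c t m x y) = ∑ m, c t a x m * c t m y z
  unit : ∀ t ∈ U, ∀ a i, (∑ j, c t a j i * e t j) = if a = i then (1 : ℝ) else 0
  invar : ∀ t ∈ U, ∀ x y z, (∑ m, g' t m z * c t m x y) = ∑ m, g' t x m * c t m y z
  lie_g : ∀ t ∈ U, ∀ i j, lieMet E g' t i j = Dt t * g' t i j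
  lie_c : ∀ t ∈ U, ∀ a i j, lieMul E c t a i j = k t * c t a i j
  e_inv : ∀ t ∈ U, ∀ a, (∑ i, ∑ j, c t a i j * E t i * Einv t j) = e t a
  sym_E : ∀ Y Z V : VF n, SmoothVF U Y → SmoothVF U Z → SmoothVF U V → ∀ t ∈ U,
    covMul4 g' c E Y Z V t = covMul4 g' c Y E Z V t

/-- Weak quasi-homogeneous pencil (h, h̃) with Euler vector field E. -/
structure IsWQH (U : Set (Pt n)) (h h' : Met n) (E : VF n) (D Dt : Pt n → ℝ) : Prop where
  met_h : IsMetricOn U h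
  met_h' : IsMetricOn U h'
  compat : Compatible U h h'
  smooth_E : SmoothVF U E
  smooth_D : ContDiffOn ℝ (⊤ : ℕ∞) D U
  smooth_Dt : ContDiffOn ℝ (⊤ : ℕ∞) Dt U
  lie_h' : ∀ t ∈ U, ∀ i j, lieMet E h' t i j = Dt t * h' t i j
  cov_E : ∀ X : VF n, SmoothVF U X → ∀ t ∈ U, ∀ a, covV h X E t a = (D t / 2) * X t a
  diff_const : ∃ c₀ : ℝ, ∀ t ∈ U, Dt t - D t = c₀

/-- Frobenius manifold structure (U, •, g̃, E). -/
structure IsFrob (U : Set (Pt n)) (c : Mul2 n) (g' : Met n) (E e : VF n) (D k : ℝ) : Prop where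
  met : IsMetricOn U g'
  flat : FlatOn U g'
  smooth_c : SmoothMul2 U c
  smooth_E : SmoothVF U E
  smooth_e : SmoothVF U e
  comm : ∀ t ∈ U, ∀ a i j, c t a i j = c t a j i
  assoc : ∀ t ∈ U, ∀ a x y z, (∑ m, c t a m z * c t m x y) = ∑ m, c t a x m * c t m y z
  unit : ∀ t ∈ U, ∀ a i, (∑ j, c t a j i * e t j) = if a = i then (1 : ℝ) else 0
  invar : ∀ t ∈ U, ∀ x y z, (∑ m, g' t m z * c t m x y) = ∑ m, g' t x m * c t m y z
  e_par : ∀ X : VF n, SmoothVF U X → ∀ t ∈ U, ∀ a, covV g' X e t a = 0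
  tot_sym : TotSym U g' c
  nabla2E : ∀ X Y : VF n, SmoothVF U X → SmoothVF U Y → ∀ t ∈ U, ∀ a,
    covV g' X (covV g' Y E) t a - covV g' (covV g' X Y) E t a = 0
  lie_g : ∀ t ∈ U, ∀ i j, lieMet E g' t i j = D * g' t i j
  lie_c : ∀ t ∈ U, ∀ a i j, lieMul E c t a i j = k * c t a i j

/-- The intersection metric `g` of a Frobenius manifold: g*g̃ = E•, together with
its standard properties. -/
structure IsIntersection (U : Set (Pt n)) (c : Mul2 n) (g g' : Met n) (E : VF n)
    (d : ℝ) : Prop where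
  met : IsMetricOn U g
  defn : ∀ t ∈ U, ∀ a j, (∑ l, (g t)⁻¹ a l * g' t l j) = ∑ i, c t a i j * E t i
  lie_g : ∀ t ∈ U, ∀ i j, lieMet E g t i j = (1 - d) * g t i j
  compat : Compatible U g g'
  regular : RegularTriple U g g' E
  mul_eq : ∀ t ∈ U, ∀ a i j, bulMul g g' E t a i j = c t a i j

/-!
Put `dX = dx / p(x)`. The metric with inverse matrix `[[0, p], [p, q]]` is the Walker metric
`2 dX dy - q dX²`: its contravariant Christoffel symbols are linear in `(p, q)`, and its
contravariant curvature is `-(1/2) ∂_y² q` times a constant tensor. Inverse matrices of this shape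
form a linear space, so any two such metrics are compatible.

For `h` and `h̃` one finds `u ∘ v = u • T v`, where `•` is the product of the dual numbers with
`dy = 1` and `dx = ε`, and `T` is upper triangular with diagonal `(1/2 - x f'/f, 1/2)`; hence `•` is
the multiplication associated to the triple. The entries of `h` are homogeneous of degree `-1`,
while those of `h̃` and the structure constants of `•` on vector fields are constant multiples of
`1 / f(x)`, which yields the Lie derivatives along the Euler field.
-/

section PartialDerivatives

variable {U : Set (Pt n)} {F G : Pt n → ℝ} {t : Pt n} {i : Fin n}

theorem pder_congr (hU : IsOpen U) (hFG : Set.EqOn F G U) (ht : t ∈ U) :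
    pder i F t = pder i G t := by
  rw [pder, pder, (hFG.eventuallyEq_of_mem (hU.mem_nhds ht)).fderiv_eq]

@[simp]
theorem pder_const (c : ℝ) : pder i (fun _ => c) t = 0 := by
  simp [pder]

theorem pder_add (hF : DifferentiableAt ℝ F t) (hG : DifferentiableAt ℝ G t) :
    pder i (fun s => F s + G s) t = pder i F t + pder i G t := by
  simp [pder, fderiv_fun_add hF hG]

theorem pder_sub (hF : DifferentiableAt ℝ F t) (hG : DifferentiableAt ℝ G t) :
    pder i (fun s => F s - G s) t = pder i F t - pder i G t := by
  simp [pder, fderiv_fun_sub hF hG]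

theorem pder_const_mul (hF : DifferentiableAt ℝ F t) (c : ℝ) :
    pder i (fun s => c * F s) t = c * pder i F t := by
  simp [pder, fderiv_const_mul hF]

theorem pder_sum {ι : Type*} (u : Finset ι) {F : ι → Pt n → ℝ}
    (hF : ∀ j ∈ u, DifferentiableAt ℝ (F j) t) :
    pder i (fun s => ∑ j ∈ u, F j s) t = ∑ j ∈ u, pder i (F j) t := by
  simp [pder, fderiv_fun_sum hF]

theorem pder_mul (hF : DifferentiableAt ℝ F t) (hG : DifferentiableAt ℝ G t) :
    pder i (fun s => F s * G s) t = pder i F t * G t + F t * pder i G t := by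
  simp [pder, fderiv_fun_mul hF hG, add_comm, mul_comm]

theorem pder_div (hF : DifferentiableAt ℝ F t) (hG : DifferentiableAt ℝ G t) (h0 : G t ≠ 0) :
    pder i (fun s => F s / G s) t = (pder i F t * G t - F t * pder i G t) / G t ^ 2 := by
  have hGinv : HasFDerivAt (fun s => (G s)⁻¹) (-(G t ^ 2)⁻¹ • fderiv ℝ G t) t :=
    (hasDerivAt_inv h0).comp_hasFDerivAt t hG.hasFDerivAt
  simp only [div_eq_mul_inv, pder_mul hF hGinv.differentiableAt]
  simp only [pder, hGinv.fderiv, smul_apply, smul_eq_mul]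
  field_simp
  ring

theorem pder_comp_apply {f : ℝ → ℝ} {f' : ℝ} {j : Fin n} (hf : HasDerivAt f f' (t j)) :
    pder i (fun s => f (s j)) t = if j = i then f' else 0 := by
  have hj : HasFDerivAt (fun s : Pt n => s j) (ContinuousLinearMap.proj (R := ℝ) j) t :=
    hasFDerivAt_apply j t
  have := (hf.comp_hasFDerivAt t hj).fderiv
  simp only [Function.comp_def] at this
  simp [pder, this, Pi.single_apply]

theorem pder_apply (j : Fin n) : pder i (fun s => s j) t = if j = i then 1 else 0 :=
  pder_comp_apply (hasDerivAt_id (t j))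

theorem contDiffOn_pder (hU : IsOpen U) (hF : ContDiffOn ℝ (⊤ : ℕ∞) F U) (i : Fin n) :
    ContDiffOn ℝ (⊤ : ℕ∞) (pder i F) U :=
  (hF.fderiv_of_isOpen hU (by simp)).clm_apply contDiffOn_const

theorem differentiableAt_pder (hU : IsOpen U) (hF : ContDiffOn ℝ (⊤ : ℕ∞) F U) (ht : t ∈ U)
    (i : Fin n) : DifferentiableAt ℝ (pder i F) t :=
  ((contDiffOn_pder hU hF i).contDiffAt (hU.mem_nhds ht)).differentiableAt (by simp)

theorem pder_comm (hF : ContDiffAt ℝ 2 F t) (i j : Fin n) :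
    pder i (pder j F) t = pder j (pder i F) t := by
  have hd : DifferentiableAt ℝ (fderiv ℝ F) t :=
    (hF.fderiv_right (m := 1) (by norm_num)).differentiableAt (by simp)
  have hsecond (k l : Fin n) :
      pder k (pder l F) t = fderiv ℝ (fderiv ℝ F) t (Pi.single k 1) (Pi.single l 1) := by
    change fderiv ℝ (fun s => fderiv ℝ F s (Pi.single l 1)) t (Pi.single k 1) = _
    simp [fderiv_clm_apply hd (differentiableAt_const _)]
  rw [hsecond, hsecond, hF.isSymmSndFDerivAt (by simp)]

end PartialDerivatives

section Tensors

variable {U : Set (Pt n)} {g g' : Met n} {t : Pt n}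

/-- The contravariant Christoffel symbols `Γ^{km}_i = -∑ l, g^{kl} Γ^m_{il}`. -/
def chrUp (g : Met n) (k m i : Fin n) (t : Pt n) : ℝ :=
  -∑ l, (g t)⁻¹ k l * chr g m i l t

/-- The components `R^m_{kij}` of the curvature: `R(∂_i, ∂_j) ∂_k = ∑ m, R^m_{kij} ∂_m`. -/
def riem (g : Met n) (m k i j : Fin n) (t : Pt n) : ℝ :=
  pder i (chr g m j k) t - pder j (chr g m i k) t
    + ∑ l, (chr g m i l t * chr g l j k t - chr g m j l t * chr g l i k t)

/-- The components of `g* R(∂_i, ∂_j)` as a map from 1-forms to vector fields. -/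
def riemUp (g : Met n) (k m i j : Fin n) (t : Pt n) : ℝ :=
  -∑ l, (g t)⁻¹ k l * riem g m l i j t

theorem riem_swap (g : Met n) (m k i j : Fin n) (t : Pt n) :
    riem g m k j i t = -riem g m k i j t := by
  simp only [riem, Finset.sum_sub_distrib]
  ring

theorem contDiffOn_chr (hU : IsOpen U) (hg : SmoothMet U g)
    (hg_inv : SmoothMet U fun t => (g t)⁻¹) (k i j : Fin n) :
    ContDiffOn ℝ (⊤ : ℕ∞) (chr g k i j) U :=
  contDiffOn_const.mul <| ContDiffOn.sum fun l _ => (hg_inv k l).mul <|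
    ((contDiffOn_pder hU (hg j l) i).add (contDiffOn_pder hU (hg i l) j)).sub
      (contDiffOn_pder hU (hg i j) l)

theorem mup_covF (g : Met n) (X : VF n) (α : OneForm n) (t : Pt n) (k : Fin n) :
    mup g (covF g X α) t k = ∑ i, X t i *
      (∑ l, (g t)⁻¹ k l * pder i (fun s => α s l) t + ∑ m, chrUp g k m i t * α t m) := by
  have hΓ (i : Fin n) : ∑ m, chrUp g k m i t * α t m
      = -∑ l, (g t)⁻¹ k l * ∑ m, chr g m i l t * α t m := by
    simp only [chrUp, neg_mul, Finset.sum_mul, Finset.mul_sum, Finset.sum_neg_distrib]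
    rw [Finset.sum_comm]
    simp only [mul_assoc]
  simp only [hΓ, ← sub_eq_add_neg, ← Finset.sum_sub_distrib, ← mul_sub]
  simp only [mup, covF, Finset.mul_sum _ _ (X t _), Finset.mul_sum _ _ ((g t)⁻¹ k _)]
  rw [Finset.sum_comm]
  simp only [mul_left_comm]

theorem covV_covV_single (hΓ : ∀ k i j, DifferentiableAt ℝ (chr g k i j) t) (X : VF n) {Y : VF n}
    (hY : ∀ j, DifferentiableAt ℝ (fun s => Y s j) t) (k m : Fin n) :
    covV g X (covV g Y fun _ => Pi.single k 1) t m
      = ∑ j, (∑ i, X t i * pder i (fun s => Y s j) t) * chr g m j k t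
        + ∑ i, ∑ j, X t i * Y t j *
          (pder i (chr g m j k) t + ∑ l, chr g m i l t * chr g l j k t) := by
  have hYk (s : Pt n) (l : Fin n) :
      covV g Y (fun _ => Pi.single k 1) s l = ∑ j, Y s j * chr g l j k s := by
    simp [covV, Pi.single_apply]
  have hder (i : Fin n) : pder i (fun s => ∑ j, Y s j * chr g m j k s) t
      = ∑ j, (pder i (fun s => Y s j) t * chr g m j k t + Y t j * pder i (chr g m j k) t) := by
    rw [pder_sum _ fun j _ => (hY j).fun_mul (hΓ m j k)]
    exact Finset.sum_congr rfl fun j _ => pder_mul (hY j) (hΓ m j k)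
  rw [covV]
  simp only [hYk, hder, Finset.sum_add_distrib, mul_add, Finset.mul_sum, Finset.sum_mul,
    ← add_assoc]
  congr 1
  · congr 1
    · rw [Finset.sum_comm]
      simp only [mul_assoc]
    · simp only [mul_assoc]
  · refine Finset.sum_congr rfl fun i _ => ?_
    rw [Finset.sum_comm]
    exact Finset.sum_congr rfl fun j _ => Finset.sum_congr rfl fun l _ => by ring

theorem curvV_single (hΓ : ∀ k i j, DifferentiableAt ℝ (chr g k i j) t) {X Y : VF n}
    (hX : ∀ j, DifferentiableAt ℝ (fun s => X s j) t)
    (hY : ∀ j, DifferentiableAt ℝ (fun s => Y s j) t) (k m : Fin n) :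
    curvV g X Y (fun _ => Pi.single k 1) t m = ∑ i, ∑ j, X t i * Y t j * riem g m k i j t := by
  have hbr : covV g (vbr X Y) (fun _ => Pi.single k 1) t m
      = ∑ j, (∑ i, X t i * pder i (fun s => Y s j) t) * chr g m j k t
        - ∑ j, (∑ i, Y t i * pder i (fun s => X s j) t) * chr g m j k t := by
    simp [covV, vbr, Pi.single_apply, sub_mul]
  have hswap : ∑ i, ∑ j, Y t i * X t j *
        (pder i (chr g m j k) t + ∑ l, chr g m i l t * chr g l j k t)
      = ∑ i, ∑ j, X t i * Y t j *
        (pder j (chr g m i k) t + ∑ l, chr g m j l t * chr g l i k t) := by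
    rw [Finset.sum_comm]
    simp only [mul_comm (Y t _)]
  have hriem : ∑ i, ∑ j, X t i * Y t j * riem g m k i j t
      = ∑ i, ∑ j, X t i * Y t j * (pder i (chr g m j k) t + ∑ l, chr g m i l t * chr g l j k t)
        - ∑ i, ∑ j, X t i * Y t j *
          (pder j (chr g m i k) t + ∑ l, chr g m j l t * chr g l i k t) := by
    simp only [← Finset.sum_sub_distrib, ← mul_sub, riem]
    simp only [Finset.sum_sub_distrib, add_sub_add_comm]
  rw [curvV, covV_covV_single hΓ X hY, covV_covV_single hΓ Y hX, hbr, hswap, hriem]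
  ring

theorem mup_curvF (hΓ : ∀ k i j, DifferentiableAt ℝ (chr g k i j) t) {X Y : VF n}
    (hX : ∀ j, DifferentiableAt ℝ (fun s => X s j) t)
    (hY : ∀ j, DifferentiableAt ℝ (fun s => Y s j) t) (α : OneForm n) (k : Fin n) :
    mup g (curvF g X Y α) t k
      = ∑ m, α t m * ∑ i, ∑ j, X t i * Y t j * riemUp g k m i j t := by
  have hR (m : Fin n) : ∑ i, ∑ j, X t i * Y t j * riemUp g k m i j t
      = -∑ l, (g t)⁻¹ k l * ∑ i, ∑ j, X t i * Y t j * riem g m l i j t := by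
    simp only [riemUp, mul_neg, Finset.sum_neg_distrib, Finset.mul_sum,
      mul_left_comm ((g t)⁻¹ k _)]
    exact congrArg Neg.neg <|
      (Finset.sum_congr rfl fun i _ => Finset.sum_comm).trans Finset.sum_comm
  simp only [mup, curvF, curvV_single hΓ hX hY, hR, mul_neg, Finset.sum_neg_distrib]
  simp only [Finset.mul_sum _ _ ((g t)⁻¹ k _), Finset.mul_sum _ _ (α t _)]
  rw [Finset.sum_comm]
  simp only [mul_left_comm]

theorem inv_pencil {lam : ℝ} (hu : IsUnit ((g t)⁻¹ + lam • (g' t)⁻¹)) :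
    (pencil g g' lam t)⁻¹ = (g t)⁻¹ + lam • (g' t)⁻¹ :=
  Matrix.nonsing_inv_nonsing_inv _ ((Matrix.isUnit_iff_isUnit_det _).1 hu)

theorem almostCompatible_of_chrUp_pencil
    (hΓ : ∀ lam : ℝ, (∀ t ∈ U, IsUnit ((g t)⁻¹ + lam • (g' t)⁻¹)) → ∀ t ∈ U, ∀ k m i,
      chrUp (pencil g g' lam) k m i t = chrUp g k m i t + lam * chrUp g' k m i t) :
    AlmostCompatible U g g' := by
  intro lam hu X _ α _ t ht k
  simp only [mup_covF, hΓ lam hu t ht, inv_pencil (hu t ht), Matrix.add_apply, Matrix.smul_apply,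
    smul_eq_mul, Finset.mul_sum, ← Finset.sum_add_distrib]
  refine Finset.sum_congr rfl fun i _ => ?_
  simp only [add_mul, Finset.sum_add_distrib, mul_assoc, ← Finset.mul_sum]
  ring

theorem compatible_of_chrUp_riemUp_pencil (hU : IsOpen U)
    (hg : ∀ t ∈ U, ∀ k i j, DifferentiableAt ℝ (chr g k i j) t)
    (hg' : ∀ t ∈ U, ∀ k i j, DifferentiableAt ℝ (chr g' k i j) t)
    (hpencil : ∀ lam : ℝ, (∀ t ∈ U, IsUnit ((g t)⁻¹ + lam • (g' t)⁻¹)) → ∀ t ∈ U,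
      (∀ k i j, DifferentiableAt ℝ (chr (pencil g g' lam) k i j) t) ∧
      (∀ k m i, chrUp (pencil g g' lam) k m i t = chrUp g k m i t + lam * chrUp g' k m i t) ∧
      ∀ k m i j,
        riemUp (pencil g g' lam) k m i j t = riemUp g k m i j t + lam * riemUp g' k m i j t) :
    Compatible U g g' := by
  refine ⟨almostCompatible_of_chrUp_pencil fun lam hu t ht => (hpencil lam hu t ht).2.1,
    fun lam hu X Y hX hY α _ t ht k => ?_⟩
  have hdiff {Z : VF n} (hZ : SmoothVF U Z) (j : Fin n) : DifferentiableAt ℝ (fun s => Z s j) t :=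
    ((hZ j).contDiffAt (hU.mem_nhds ht)).differentiableAt (by simp)
  obtain ⟨hΓ, -, hR⟩ := hpencil lam hu t ht
  rw [mup_curvF hΓ (hdiff hX) (hdiff hY), mup_curvF (hg t ht) (hdiff hX) (hdiff hY),
    mup_curvF (hg' t ht) (hdiff hX) (hdiff hY), Finset.mul_sum, ← Finset.sum_add_distrib]
  refine Finset.sum_congr rfl fun m _ => ?_
  simp only [hR, mul_add, Finset.sum_add_distrib, mul_left_comm _ lam, ← Finset.mul_sum]

theorem circM_eq_sum_chr (g g' : Met n) (u v : OneForm n) (t : Pt n) (k : Fin n) :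
    circM g g' u v t k
      = ∑ i, mup g u t i * ∑ m, (chr g' m i k t - chr g m i k t) * v t m := by
  simp only [circM, covF, ← Finset.sum_sub_distrib, ← mul_sub, sub_sub_sub_cancel_left, sub_mul]

theorem Tmat_mulVec_TinvF {E : VF n} (hT : IsUnit (Tmat g g' E t)) (v : OneForm n) :
    (Tmat g g' E t).mulVec (TinvF g g' E v t) = v t := by
  change (Tmat g g' E t).mulVec ((Tmat g g' E t)⁻¹.mulVec (v t)) = v t
  rw [Matrix.mulVec_mulVec, Matrix.mul_nonsing_inv _ ((Matrix.isUnit_iff_isUnit_det _).1 hT),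
    Matrix.one_mulVec]

end Tensors

section EulerField

variable {t : Pt n} {φ ψ : Pt n → ℝ}

/-- The Euler vector field `∑ i, t^i ∂_i`. -/
def eulerField : VF n := fun t => t

theorem lieFun_congr {U : Set (Pt n)} (hU : IsOpen U) (hφψ : Set.EqOn φ ψ U) (ht : t ∈ U)
    (E : VF n) : lieFun E φ t = lieFun E ψ t :=
  Finset.sum_congr rfl fun _ _ => congrArg _ (pder_congr hU hφψ ht)

theorem lieFun_eulerField : lieFun eulerField φ t = fderiv ℝ φ t t := by
  rw [← congrArg (fderiv ℝ φ t) (Finset.univ_sum_single t), map_sum]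
  refine Finset.sum_congr rfl fun i _ => ?_
  rw [pder, eulerField, ← smul_eq_mul, ← map_smul, ← Pi.single_smul, smul_eq_mul, mul_one]

-- Euler's identity: differentiate `φ (c • t) = c ^ k * φ t` at `c = 1`.
theorem lieFun_eulerField_of_homogeneous {k : ℤ} (hφ : DifferentiableAt ℝ φ t)
    (hhom : ∀ᶠ c : ℝ in nhds 1, φ (c • t) = c ^ k * φ t) :
    lieFun eulerField φ t = k * φ t := by
  have hray : HasDerivAt (fun c : ℝ => c • t) t 1 := by
    simpa using (hasDerivAt_id (1 : ℝ)).smul_const t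
  have hleft : HasDerivAt (fun c : ℝ => φ (c • t)) (fderiv ℝ φ t t) 1 :=
    HasFDerivAt.comp_hasDerivAt (x := (1 : ℝ)) (by simpa using hφ.hasFDerivAt) hray
  have hright : HasDerivAt (fun c : ℝ => c ^ k * φ t) (k * φ t) 1 := by
    simpa using (hasDerivAt_zpow k (1 : ℝ) (by simp)).mul_const (φ t)
  rw [lieFun_eulerField]
  exact hleft.unique (hright.congr_of_eventuallyEq hhom)

theorem lieFun_eulerField_inv_comp_apply {f : ℝ → ℝ} {j : Fin n}
    (hf : DifferentiableAt ℝ f (t j)) (hf0 : f (t j) ≠ 0) (c : ℝ) :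
    lieFun eulerField (fun s => (f (s j))⁻¹ * c) t
      = -(t j * deriv f (t j) / f (t j)) * ((f (t j))⁻¹ * c) := by
  simp only [lieFun, pder_comp_apply ((hf.hasDerivAt.fun_inv hf0).mul_const c), eulerField,
    mul_ite, mul_zero, Finset.sum_ite_eq, Finset.mem_univ, if_true]
  field_simp

theorem lieMet_eulerField (g : Met n) (i j : Fin n) :
    lieMet eulerField g t i j = lieFun eulerField (fun s => g s i j) t + 2 * g t i j := by
  simp only [lieMet, lieFun, eulerField, pder_apply, Matrix.of_apply, mul_ite, mul_one, mul_zero,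
    Finset.sum_ite_eq', Finset.mem_univ, if_true]
  ring

theorem lieMul_eulerField (c : Mul2 n) (k i j : Fin n) :
    lieMul eulerField c t k i j = lieFun eulerField (fun s => c s k i j) t + c t k i j := by
  have hbr (l m : Fin n) :
      vbr eulerField (fun _ => Pi.single l 1) t m = -(Pi.single l 1 : Fin n → ℝ) m := by
    simp [vbr, eulerField, pder_apply, Pi.single_apply]
  have hmapp (s : Pt n) :
      mapp c (fun _ => Pi.single i 1) (fun _ => Pi.single j 1) s k = c s k i j := by
    simp [mapp, Pi.single_apply]
  have hout : vbr eulerField (mapp c (fun _ => Pi.single i 1) (fun _ => Pi.single j 1)) t k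
      = lieFun eulerField (fun s => c s k i j) t - c t k i j := by
    simp [vbr, lieFun, eulerField, hmapp, pder_apply]
  rw [lieMul, hout]
  simp [mapp, hbr, Pi.single_apply]

end EulerField

section WalkerMetrics

/-- In dimension two, the metric `2 dX dy - q dX²` with `dX = dx / p`, where `p` depends on `x`
only (a Walker metric, whose null line field spanned by `∂_y` is parallel), encoded by its inverse
matrix `[[0, p], [p, q]]` in the coordinates `(x, y)`. -/
structure IsWalkerMet (M : Set (Pt 2)) (g : Met 2) (p q : Pt 2 → ℝ) : Prop where
  contDiffOn_p : ContDiffOn ℝ (⊤ : ℕ∞) p M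
  contDiffOn_q : ContDiffOn ℝ (⊤ : ℕ∞) q M
  ne_zero : ∀ t ∈ M, p t ≠ 0
  pder_one_p : ∀ t ∈ M, pder 1 p t = 0
  eq_inv : ∀ t ∈ M, g t = !![0, p t; p t, q t]⁻¹

theorem isUnit_antitriangular {a : ℝ} (ha : a ≠ 0) (b : ℝ) : IsUnit !![0, a; a, b] := by
  rw [Matrix.isUnit_iff_isUnit_det, Matrix.det_fin_two_of, isUnit_iff_ne_zero]
  simpa using ha

theorem inv_antitriangular {a : ℝ} (ha : a ≠ 0) (b : ℝ) :
    !![0, a; a, b]⁻¹ = !![-b / a ^ 2, 1 / a; 1 / a, 0] := by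
  refine Matrix.inv_eq_right_inv ?_
  ext i j
  simp only [Matrix.mul_apply, Fin.sum_univ_two]
  fin_cases i <;> fin_cases j <;>
    simp only [Fin.zero_eta, Fin.mk_one, Matrix.of_apply, Matrix.cons_val', Matrix.cons_val,
      Matrix.one_apply, if_true, zero_ne_one, one_ne_zero, if_false] <;>
    field_simp <;> ring

namespace IsWalkerMet

variable {M : Set (Pt 2)} {g g' : Met 2} {p q p' q' : Pt 2 → ℝ} {t : Pt 2}

theorem eq_of_mem (hg : IsWalkerMet M g p q) (ht : t ∈ M) :
    g t = !![-q t / p t ^ 2, 1 / p t; 1 / p t, 0] := by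
  rw [hg.eq_inv t ht, inv_antitriangular (hg.ne_zero t ht)]

theorem inv_eq (hg : IsWalkerMet M g p q) (ht : t ∈ M) : (g t)⁻¹ = !![0, p t; p t, q t] := by
  rw [hg.eq_inv t ht, Matrix.nonsing_inv_nonsing_inv _ ((Matrix.isUnit_iff_isUnit_det _).1
    (isUnit_antitriangular (hg.ne_zero t ht) _))]

theorem smoothMet_inv (hg : IsWalkerMet M g p q) : SmoothMet M fun t => (g t)⁻¹ := by
  intro i j
  refine ContDiffOn.congr ?_ fun t ht => congrFun₂ (hg.inv_eq ht) i j
  fin_cases i <;> fin_cases j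
  exacts [contDiffOn_const, hg.contDiffOn_p, hg.contDiffOn_p, hg.contDiffOn_q]

theorem isMetricOn (hg : IsWalkerMet M g p q) : IsMetricOn M g := by
  refine ⟨fun i j => ?_, fun t ht => ⟨?_, ?_⟩⟩
  · refine ContDiffOn.congr ?_ fun t ht => congrFun₂ (hg.eq_of_mem ht) i j
    have hp_inv : ContDiffOn ℝ (⊤ : ℕ∞) (fun t => 1 / p t) M :=
      contDiffOn_const.div hg.contDiffOn_p hg.ne_zero
    have hq_div : ContDiffOn ℝ (⊤ : ℕ∞) (fun t => -q t / p t ^ 2) M :=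
      hg.contDiffOn_q.neg.div (hg.contDiffOn_p.pow 2) fun t ht => pow_ne_zero 2 (hg.ne_zero t ht)
    fin_cases i <;> fin_cases j
    exacts [hq_div, hp_inv, hp_inv, contDiffOn_const]
  · rw [hg.eq_of_mem ht]
    ext i j
    fin_cases i <;> fin_cases j <;> rfl
  · rw [hg.eq_inv t ht, Matrix.isUnit_nonsing_inv_iff]
    exact isUnit_antitriangular (hg.ne_zero t ht) _

theorem differentiableAt_p (hM : IsOpen M) (hg : IsWalkerMet M g p q) (ht : t ∈ M) :
    DifferentiableAt ℝ p t :=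
  (hg.contDiffOn_p.contDiffAt (hM.mem_nhds ht)).differentiableAt (by simp)

theorem differentiableAt_q (hM : IsOpen M) (hg : IsWalkerMet M g p q) (ht : t ∈ M) :
    DifferentiableAt ℝ q t :=
  (hg.contDiffOn_q.contDiffAt (hM.mem_nhds ht)).differentiableAt (by simp)

theorem pder_eq (hM : IsOpen M) (hg : IsWalkerMet M g p q) (ht : t ∈ M) (l i j : Fin 2) :
    pder l (fun s => g s i j) t
      = !![-(pder l q t * p t - 2 * q t * pder l p t) / p t ^ 3, -pder l p t / p t ^ 2;
           -pder l p t / p t ^ 2, 0] i j := by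
  have hp := hg.differentiableAt_p hM ht
  have hq := hg.differentiableAt_q hM ht
  have hp0 := hg.ne_zero t ht
  rw [pder_congr hM (fun s hs => congrFun₂ (hg.eq_of_mem hs) i j) ht]
  have h00 : pder l (fun s => -q s / p s ^ 2) t
      = -(pder l q t * p t - 2 * q t * pder l p t) / p t ^ 3 := by
    have hneg : pder l (fun s => -q s) t = -pder l q t := by simp [pder]
    rw [pder_div hq.fun_neg (hp.fun_pow 2) (pow_ne_zero 2 hp0), hneg]
    simp only [pow_two, pder_mul hp hp]
    field_simp
    ring
  have h01 : pder l (fun s => 1 / p s) t = -pder l p t / p t ^ 2 := by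
    rw [pder_div (differentiableAt_const 1) hp hp0, pder_const]
    ring
  fin_cases i <;> fin_cases j
  exacts [h00, h01, h01, pder_const 0]

theorem chr_zero (hM : IsOpen M) (hg : IsWalkerMet M g p q) (ht : t ∈ M) (i j : Fin 2) :
    chr g 0 i j t = !![(pder 1 q t / 2 - pder 0 p t) / p t, 0; 0, 0] i j := by
  have hp0 := hg.ne_zero t ht
  simp only [chr, Fin.sum_univ_two, hg.inv_eq ht, hg.pder_eq hM ht]
  fin_cases i <;> fin_cases j <;>
    simp only [Fin.zero_eta, Fin.mk_one, Matrix.of_apply, Matrix.cons_val', Matrix.cons_val,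
      hg.pder_one_p t ht] <;>
    field_simp <;> ring

theorem chr_one (hM : IsOpen M) (hg : IsWalkerMet M g p q) (ht : t ∈ M) (i j : Fin 2) :
    chr g 1 i j t
      = !![(q t * pder 1 q t - p t * pder 0 q t) / (2 * p t ^ 2), -pder 1 q t / (2 * p t);
           -pder 1 q t / (2 * p t), 0] i j := by
  have hp0 := hg.ne_zero t ht
  simp only [chr, Fin.sum_univ_two, hg.inv_eq ht, hg.pder_eq hM ht]
  fin_cases i <;> fin_cases j <;>
    simp only [Fin.zero_eta, Fin.mk_one, Matrix.of_apply, Matrix.cons_val', Matrix.cons_val,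
      hg.pder_one_p t ht] <;>
    field_simp <;> ring

theorem chrUp_eq (hM : IsOpen M) (hg : IsWalkerMet M g p q) (ht : t ∈ M) (k m i : Fin 2) :
    chrUp g k m i t
      = ![!![0, pder 1 q t / 2; pder 0 p t - pder 1 q t / 2, pder 0 q t / 2],
          !![0, 0; 0, pder 1 q t / 2]] i k m := by
  have hp0 := hg.ne_zero t ht
  simp only [chrUp, Fin.sum_univ_two, hg.inv_eq ht]
  fin_cases i <;> fin_cases k <;> fin_cases m <;>
    simp only [Fin.zero_eta, Fin.mk_one, hg.chr_zero hM ht, hg.chr_one hM ht, Matrix.of_apply,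
      Matrix.cons_val', Matrix.cons_val] <;>
    field_simp <;> ring

theorem pder_one_chr_zero_zero_zero (hM : IsOpen M) (hg : IsWalkerMet M g p q) (ht : t ∈ M) :
    pder 1 (chr g 0 0 0) t = pder 1 (pder 1 q) t / (2 * p t) := by
  have hp0 := hg.ne_zero t ht
  have hp := hg.differentiableAt_p hM ht
  have hp_x := differentiableAt_pder hM hg.contDiffOn_p ht 0
  have hq_y := differentiableAt_pder hM hg.contDiffOn_q ht 1
  have hp_xy : pder 1 (pder 0 p) t = 0 := by
    have hp2 : ContDiffAt ℝ 2 p t :=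
      (contDiffOn_infty.1 hg.contDiffOn_p 2).contDiffAt (hM.mem_nhds ht)
    rw [pder_comm hp2, pder_congr hM hg.pder_one_p ht, pder_const]
  have hΓ : Set.EqOn (chr g 0 0 0) (fun s => (1 / 2 * pder 1 q s - pder 0 p s) / p s) M :=
    fun s hs => (hg.chr_zero hM hs 0 0).trans (by simp [div_eq_inv_mul])
  rw [pder_congr hM hΓ ht, pder_div ((hq_y.const_mul _).fun_sub hp_x) hp hp0,
    pder_sub (hq_y.const_mul _) hp_x, pder_const_mul hq_y, hp_xy, hg.pder_one_p t ht]
  field_simp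
  ring

theorem pder_chr_one_zero_one (hM : IsOpen M) (hg : IsWalkerMet M g p q) (ht : t ∈ M)
    (i : Fin 2) : pder i (chr g 1 0 1) t
      = -(pder i (pder 1 q) t * p t - pder 1 q t * pder i p t) / (2 * p t ^ 2) := by
  have hp0 := hg.ne_zero t ht
  have hp := hg.differentiableAt_p hM ht
  have hq_y := differentiableAt_pder hM hg.contDiffOn_q ht 1
  have hΓ : Set.EqOn (chr g 1 0 1) (fun s => pder 1 q s / (-2 * p s)) M :=
    fun s hs => (hg.chr_one hM hs 0 1).trans (by simp [neg_div, div_neg])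
  rw [pder_congr hM hΓ ht, pder_div hq_y (hp.const_mul (-2)) (by simpa using hp0),
    pder_const_mul hp]
  field_simp
  ring

theorem pder_one_chr_one_zero_zero (hM : IsOpen M) (hg : IsWalkerMet M g p q) (ht : t ∈ M) :
    pder 1 (chr g 1 0 0) t
      = (pder 1 q t ^ 2 + q t * pder 1 (pder 1 q) t - p t * pder 0 (pder 1 q) t)
        / (2 * p t ^ 2) := by
  have hp0 := hg.ne_zero t ht
  have hp := hg.differentiableAt_p hM ht
  have hq := hg.differentiableAt_q hM ht
  have hq_der := differentiableAt_pder hM hg.contDiffOn_q ht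
  have hq_xy : pder 1 (pder 0 q) t = pder 0 (pder 1 q) t :=
    pder_comm ((contDiffOn_infty.1 hg.contDiffOn_q 2).contDiffAt (hM.mem_nhds ht)) 1 0
  have hΓ : Set.EqOn (chr g 1 0 0)
      (fun s => (q s * pder 1 q s - p s * pder 0 q s) / (2 * (p s * p s))) M :=
    fun s hs => (hg.chr_one hM hs 0 0).trans (by simp [pow_two])
  rw [pder_congr hM hΓ ht,
    pder_div ((hq.fun_mul (hq_der 1)).fun_sub (hp.fun_mul (hq_der 0)))
      ((hp.fun_mul hp).const_mul 2) (by simpa using hp0),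
    pder_const_mul (hp.fun_mul hp), pder_sub (hq.fun_mul (hq_der 1)) (hp.fun_mul (hq_der 0)),
    pder_mul hq (hq_der 1), pder_mul hp (hq_der 0), pder_mul hp hp, hq_xy, hg.pder_one_p t ht]
  field_simp
  ring

theorem riem_zero_one (hM : IsOpen M) (hg : IsWalkerMet M g p q) (ht : t ∈ M) (m k : Fin 2) :
    riem g m k 0 1 t
      = !![-pder 1 (pder 1 q) t / (2 * p t), 0;
           -(q t * pder 1 (pder 1 q) t) / (2 * p t ^ 2), pder 1 (pder 1 q) t / (2 * p t)] m k := by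
  have hp0 := hg.ne_zero t ht
  have h010 : pder 0 (chr g 0 1 0) t = 0 :=
    (pder_congr hM (fun s hs => hg.chr_zero hM hs 1 0) ht).trans (pder_const 0)
  have h011 : pder 0 (chr g 0 1 1) t = 0 :=
    (pder_congr hM (fun s hs => hg.chr_zero hM hs 1 1) ht).trans (pder_const 0)
  have h001 : pder 1 (chr g 0 0 1) t = 0 :=
    (pder_congr hM (fun s hs => hg.chr_zero hM hs 0 1) ht).trans (pder_const 0)
  have h111 : pder 0 (chr g 1 1 1) t = 0 :=
    (pder_congr hM (fun s hs => hg.chr_one hM hs 1 1) ht).trans (pder_const 0)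
  have h110 : pder 0 (chr g 1 1 0) t = pder 0 (chr g 1 0 1) t :=
    pder_congr hM (fun s hs => by simp [hg.chr_one hM hs]) ht
  simp only [riem, Fin.sum_univ_two]
  fin_cases m <;> fin_cases k <;>
    simp only [Fin.zero_eta, Fin.mk_one, Matrix.of_apply, Matrix.cons_val', Matrix.cons_val,
      h010, h011, h001, h111, h110, hg.pder_one_chr_zero_zero_zero hM ht,
      hg.pder_chr_one_zero_one hM ht, hg.pder_one_chr_one_zero_zero hM ht, hg.pder_one_p t ht,
      hg.chr_zero hM ht, hg.chr_one hM ht] <;>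
    field_simp <;> ring

theorem riemUp_eq (hM : IsOpen M) (hg : IsWalkerMet M g p q) (ht : t ∈ M) (k m i j : Fin 2) :
    riemUp g k m i j t
      = -(1 / 2) * pder 1 (pder 1 q) t * (!![0, 1; -1, 0] k m * !![0, 1; -1, 0] i j) := by
  have hp0 := hg.ne_zero t ht
  have h01 : riemUp g k m 0 1 t
      = -(1 / 2) * pder 1 (pder 1 q) t * !![0, 1; -1, 0] k m := by
    simp only [riemUp, Fin.sum_univ_two, hg.inv_eq ht, hg.riem_zero_one hM ht]
    fin_cases k <;> fin_cases m <;>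
      simp only [Fin.zero_eta, Fin.mk_one, Matrix.of_apply, Matrix.cons_val', Matrix.cons_val] <;>
      field_simp <;> ring
  have h10 : riemUp g k m 1 0 t = -riemUp g k m 0 1 t := by
    simp only [riemUp, riem_swap g _ _ 0 1, mul_neg, Finset.sum_neg_distrib]
  have hdiag (i : Fin 2) : riemUp g k m i i t = 0 := by
    simp [riemUp, riem]
  fin_cases i <;> fin_cases j <;>
    simp [hdiag, h10, h01]

theorem pencil (hg : IsWalkerMet M g p q) (hg' : IsWalkerMet M g' p' q') (hM : IsOpen M)
    {lam : ℝ} (hu : ∀ t ∈ M, IsUnit ((g t)⁻¹ + lam • (g' t)⁻¹)) :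
    IsWalkerMet M (pencil g g' lam) (fun s => p s + lam * p' s) (fun s => q s + lam * q' s) where
  contDiffOn_p := hg.contDiffOn_p.add (contDiffOn_const.mul hg'.contDiffOn_p)
  contDiffOn_q := hg.contDiffOn_q.add (contDiffOn_const.mul hg'.contDiffOn_q)
  ne_zero t ht := by
    have hdet := (Matrix.isUnit_iff_isUnit_det _).1 (hu t ht)
    rw [hg.inv_eq ht, hg'.inv_eq ht, Matrix.det_fin_two] at hdet
    simpa using hdet
  pder_one_p t ht := by
    have hp' := hg'.differentiableAt_p hM ht
    rw [pder_add (hg.differentiableAt_p hM ht) (hp'.const_mul lam), pder_const_mul hp',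
      hg.pder_one_p t ht, hg'.pder_one_p t ht, mul_zero, add_zero]
  eq_inv t ht := by
    simp [_root_.pencil, hg.inv_eq ht, hg'.inv_eq ht]

theorem differentiableAt_chr (hM : IsOpen M) (hg : IsWalkerMet M g p q) (ht : t ∈ M)
    (k i j : Fin 2) : DifferentiableAt ℝ (chr g k i j) t :=
  ((contDiffOn_chr hM hg.isMetricOn.1 hg.smoothMet_inv k i j).contDiffAt
    (hM.mem_nhds ht)).differentiableAt (by simp)

theorem compatible (hM : IsOpen M) (hg : IsWalkerMet M g p q) (hg' : IsWalkerMet M g' p' q') :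
    Compatible M g g' := by
  refine compatible_of_chrUp_riemUp_pencil hM (fun t ht => hg.differentiableAt_chr hM ht)
    (fun t ht => hg'.differentiableAt_chr hM ht) fun lam hu t ht => ?_
  have hpencil := hg.pencil hg' hM hu
  have hp' := hg'.differentiableAt_p hM ht
  have hp_lin (i : Fin 2) :
      pder i (fun s => p s + lam * p' s) t = pder i p t + lam * pder i p' t := by
    rw [pder_add (hg.differentiableAt_p hM ht) (hp'.const_mul lam), pder_const_mul hp']
  have hq_lin (i : Fin 2) {s : Pt 2} (hs : s ∈ M) :
      pder i (fun s => q s + lam * q' s) s = pder i q s + lam * pder i q' s := by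
    rw [pder_add (hg.differentiableAt_q hM hs) ((hg'.differentiableAt_q hM hs).const_mul lam),
      pder_const_mul (hg'.differentiableAt_q hM hs)]
  have hq_yy : pder 1 (pder 1 fun s => q s + lam * q' s) t
      = pder 1 (pder 1 q) t + lam * pder 1 (pder 1 q') t := by
    have hq_y' := differentiableAt_pder hM hg'.contDiffOn_q ht 1
    rw [pder_congr hM (fun s hs => hq_lin 1 hs) ht,
      pder_add (differentiableAt_pder hM hg.contDiffOn_q ht 1) (hq_y'.const_mul lam),
      pder_const_mul hq_y']
  refine ⟨hpencil.differentiableAt_chr hM ht, fun k m i => ?_, fun k m i j => ?_⟩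
  · rw [hpencil.chrUp_eq hM ht, hg.chrUp_eq hM ht, hg'.chrUp_eq hM ht, hp_lin, hq_lin 0 ht,
      hq_lin 1 ht]
    fin_cases i <;> fin_cases k <;> fin_cases m <;>
      simp only [Fin.zero_eta, Fin.mk_one, Matrix.of_apply, Matrix.cons_val', Matrix.cons_val] <;>
      ring
  · rw [hpencil.riemUp_eq hM ht, hg.riemUp_eq hM ht, hg'.riemUp_eq hM ht, hq_yy]
    ring

end IsWalkerMet
end WalkerMetrics

section Counterexample

variable {f : ℝ → ℝ} {M : Set (Pt 2)} {h h' : Met 2} {t : Pt 2}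

/-- The product of the dual numbers `(a 1) + (a 0) ε` and `(b 1) + (b 0) ε`, with `dx` as `ε` and
`dy` as `1`. -/
def dualMul (a b : Fin 2 → ℝ) : Fin 2 → ℝ := ![a 0 * b 1 + a 1 * b 0, a 1 * b 1]

/-- The matrix of `T` for the counterexample, in terms of `a = x f' / f`. -/
def counterexampleT (a : ℝ) : Matrix (Fin 2) (Fin 2) ℝ := !![1 / 2 - a, -(a / 2); 0, 1 / 2]

theorem isWalkerMet_counterexample_left (hM0 : ∀ t ∈ M, t 0 ≠ 0)
    (hh : ∀ t ∈ M, h t = !![0, t 0; t 0, t 1]⁻¹) :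
    IsWalkerMet M h (fun s => s 0) (fun s => s 1) where
  contDiffOn_p := (contDiff_apply ℝ ℝ 0).contDiffOn
  contDiffOn_q := (contDiff_apply ℝ ℝ 1).contDiffOn
  ne_zero := hM0
  pder_one_p _ _ := pder_apply 0
  eq_inv := hh

theorem isWalkerMet_counterexample_right (hf : ∀ t ∈ M, ContDiffAt ℝ (⊤ : ℕ∞) f (t 0))
    (hf0 : ∀ t ∈ M, f (t 0) ≠ 0)
    (hh' : ∀ t ∈ M, h' t = !![0, f (t 0); f (t 0), f (t 0)]⁻¹) :
    IsWalkerMet M h' (fun s => f (s 0)) (fun s => f (s 0)) := by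
  have hsmooth : ContDiffOn ℝ (⊤ : ℕ∞) (fun s : Pt 2 => f (s 0)) M := fun t ht =>
    ((hf t ht).comp t (contDiff_apply ℝ ℝ 0).contDiffAt).contDiffWithinAt
  refine ⟨hsmooth, hsmooth, hf0, fun t ht => ?_, hh'⟩
  simpa using pder_comp_apply (i := 1) ((hf t ht).differentiableAt (by simp)).hasDerivAt

theorem circM_eq_dualMul (hM : IsOpen M) (hh : IsWalkerMet M h (fun s => s 0) (fun s => s 1))
    (hh' : IsWalkerMet M h' (fun s => f (s 0)) (fun s => f (s 0))) (ht : t ∈ M)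
    (hf : DifferentiableAt ℝ f (t 0)) (u v : OneForm 2) :
    circM h h' u v t
      = dualMul (u t) ((counterexampleT (t 0 * deriv f (t 0) / f (t 0))).mulVec (v t)) := by
  have hx : t 0 ≠ 0 := hh.ne_zero t ht
  have hfx : f (t 0) ≠ 0 := hh'.ne_zero t ht
  have hup : mup h u t = ![t 0 * u t 1, t 0 * u t 0 + t 1 * u t 1] := by
    ext k
    fin_cases k <;> simp [mup, hh.inv_eq ht]
  ext k
  simp only [circM_eq_sum_chr, hup, dualMul, counterexampleT, Matrix.mulVec, dotProduct,
    Fin.sum_univ_two, hh.chr_zero hM ht, hh.chr_one hM ht, hh'.chr_zero hM ht, hh'.chr_one hM ht,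
    pder_apply, pder_comp_apply hf.hasDerivAt]
  fin_cases k <;>
    simp only [Fin.zero_eta, Fin.mk_one, Matrix.of_apply, Matrix.cons_val', Matrix.cons_val,
      if_pos, zero_ne_one, one_ne_zero, if_false] <;>
    field_simp <;> ring

theorem mdown_eulerField (hh : IsWalkerMet M h (fun s => s 0) (fun s => s 1)) (ht : t ∈ M) :
    mdown h eulerField t = ![0, 1] := by
  have hx : t 0 ≠ 0 := hh.ne_zero t ht
  ext k
  simp only [mdown, eulerField, hh.eq_of_mem ht, Fin.sum_univ_two]
  fin_cases k <;>
    simp only [Fin.zero_eta, Fin.mk_one, Matrix.of_apply, Matrix.cons_val', Matrix.cons_val] <;>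
    field_simp <;> ring

theorem Tmat_eq_counterexampleT (hM : IsOpen M)
    (hh : IsWalkerMet M h (fun s => s 0) (fun s => s 1))
    (hh' : IsWalkerMet M h' (fun s => f (s 0)) (fun s => f (s 0))) (ht : t ∈ M)
    (hf : DifferentiableAt ℝ f (t 0)) :
    Tmat h h' eulerField t = counterexampleT (t 0 * deriv f (t 0) / f (t 0)) := by
  ext k m
  rw [Tmat, Matrix.of_apply, circM_eq_dualMul hM hh hh' ht hf, mdown_eulerField hh ht]
  fin_cases k <;> simp [dualMul, Matrix.mulVec_single]

theorem isUnit_counterexampleT {a : ℝ} (ha : a ≠ 1 / 2) : IsUnit (counterexampleT a) := by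
  rw [Matrix.isUnit_iff_isUnit_det, counterexampleT, Matrix.det_fin_two_of, isUnit_iff_ne_zero]
  simpa [sub_eq_zero] using ha.symm

theorem bulF_eq_dualMul (hM : IsOpen M) (hh : IsWalkerMet M h (fun s => s 0) (fun s => s 1))
    (hh' : IsWalkerMet M h' (fun s => f (s 0)) (fun s => f (s 0))) (ht : t ∈ M)
    (hf : DifferentiableAt ℝ f (t 0)) (hreg : IsUnit (Tmat h h' eulerField t))
    (u v : OneForm 2) : bulF h h' eulerField u v t = dualMul (u t) (v t) := by
  rw [bulF, circM_eq_dualMul hM hh hh' ht hf, ← Tmat_eq_counterexampleT hM hh hh' ht hf,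
    Tmat_mulVec_TinvF hreg]

theorem lieMet_eulerField_left (hM : IsOpen M)
    (hh : IsWalkerMet M h (fun s => s 0) (fun s => s 1)) (ht : t ∈ M) (i j : Fin 2) :
    lieMet eulerField h t i j = h t i j := by
  have hdiff : DifferentiableAt ℝ (fun s => h s i j) t :=
    ((hh.isMetricOn.1 i j).contDiffAt (hM.mem_nhds ht)).differentiableAt (by simp)
  have hhom : ∀ᶠ c : ℝ in nhds 1, h (c • t) i j = c ^ (-1 : ℤ) * h t i j := by
    have hmem : ∀ᶠ c : ℝ in nhds 1, c • t ∈ M :=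
      (continuous_id.smul continuous_const).continuousAt.eventually_mem
        (hM.mem_nhds (by simpa using ht))
    filter_upwards [hmem, eventually_ne_nhds one_ne_zero] with c hct hc
    have hx : t 0 ≠ 0 := hh.ne_zero t ht
    rw [hh.eq_of_mem hct, hh.eq_of_mem ht]
    simp only [Pi.smul_apply, smul_eq_mul, zpow_neg_one]
    fin_cases i <;> fin_cases j <;>
      simp only [Fin.zero_eta, Fin.mk_one, Matrix.of_apply, Matrix.cons_val', Matrix.cons_val,
        mul_zero] <;>
      field_simp
  rw [lieMet_eulerField, lieFun_eulerField_of_homogeneous hdiff hhom]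
  push_cast
  ring

theorem lieMet_eulerField_right (hM : IsOpen M)
    (hh' : IsWalkerMet M h' (fun s => f (s 0)) (fun s => f (s 0))) (ht : t ∈ M)
    (hf : DifferentiableAt ℝ f (t 0)) (i j : Fin 2) :
    lieMet eulerField h' t i j = (2 - t 0 * deriv f (t 0) / f (t 0)) * h' t i j := by
  have hscale {s : Pt 2} (hs : s ∈ M) : h' s i j = (f (s 0))⁻¹ * !![-1, 1; 1, 0] i j := by
    rw [hh'.eq_of_mem hs]
    fin_cases i <;> fin_cases j <;> simp [pow_two, neg_div]
  rw [lieMet_eulerField, lieFun_congr hM (fun s hs => hscale hs) ht,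
    lieFun_eulerField_inv_comp_apply hf (hh'.ne_zero t ht), ← hscale ht]
  ring

theorem bulMul_eq (hM : IsOpen M) (hh : IsWalkerMet M h (fun s => s 0) (fun s => s 1))
    (hh' : IsWalkerMet M h' (fun s => f (s 0)) (fun s => f (s 0))) (ht : t ∈ M)
    (hf : DifferentiableAt ℝ f (t 0)) (hreg : IsUnit (Tmat h h' eulerField t)) (k i j : Fin 2) :
    bulMul h h' eulerField t k i j
      = (f (t 0))⁻¹ * ![!![1, 0; 0, 0], !![-1, 1; 1, 0]] k i j := by
  have hfx : f (t 0) ≠ 0 := hh'.ne_zero t ht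
  have hdown (v : Fin 2 → ℝ) :
      mdown h' (fun _ => v) t = ![(f (t 0))⁻¹ * (v 1 - v 0), (f (t 0))⁻¹ * v 0] := by
    ext l
    simp only [mdown, hh'.eq_of_mem ht, Fin.sum_univ_two]
    fin_cases l <;>
      simp only [Fin.zero_eta, Fin.mk_one, Matrix.of_apply, Matrix.cons_val', Matrix.cons_val] <;>
      field_simp <;> ring
  have hup (α : OneForm 2) :
      mup h' α t = ![f (t 0) * α t 1, f (t 0) * (α t 0 + α t 1)] := by
    ext l
    fin_cases l <;> simp [mup, hh'.inv_eq ht, mul_add]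
  rw [bulMul, bulV, hup, bulF_eq_dualMul hM hh hh' ht hf hreg, hdown, hdown]
  fin_cases k <;> fin_cases i <;> fin_cases j <;>
    simp [dualMul, hfx, ← sub_eq_add_neg]

theorem lieMul_eulerField_bulMul (hM : IsOpen M)
    (hh : IsWalkerMet M h (fun s => s 0) (fun s => s 1))
    (hh' : IsWalkerMet M h' (fun s => f (s 0)) (fun s => f (s 0)))
    (hf : ∀ t ∈ M, DifferentiableAt ℝ f (t 0)) (hreg : RegularTriple M h h' eulerField)
    (ht : t ∈ M) (k i j : Fin 2) :
    lieMul eulerField (bulMul h h' eulerField) t k i j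
      = (1 - t 0 * deriv f (t 0) / f (t 0)) * bulMul h h' eulerField t k i j := by
  have hscale {s : Pt 2} (hs : s ∈ M) := bulMul_eq hM hh hh' hs (hf s hs) (hreg s hs) k i j
  rw [lieMul_eulerField, lieFun_congr hM (fun s hs => hscale hs) ht,
    lieFun_eulerField_inv_comp_apply (hf t ht) (hh'.ne_zero t ht), ← hscale ht]
  ring

end Counterexample

theorem stmt16_general {f : ℝ → ℝ} {M : Set (Pt 2)} (hM : IsOpen M)
    (hf : ∀ t ∈ M, ContDiffAt ℝ (⊤ : ℕ∞) f (t 0)) (hf0 : ∀ t ∈ M, f (t 0) ≠ 0)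
    (hMsub : ∀ t ∈ M, t 0 * deriv f (t 0) / f (t 0) ≠ 1 / 2 ∧ t 0 ≠ 0) {h h' : Met 2}
    (hh : ∀ t ∈ M, h t = !![0, t 0; t 0, t 1]⁻¹)
    (hh' : ∀ t ∈ M, h' t = !![0, f (t 0); f (t 0), f (t 0)]⁻¹) :
    (IsMetricOn M h ∧ IsMetricOn M h' ∧ Compatible M h h' ∧ RegularTriple M h h' eulerField)
    ∧ ((∀ t ∈ M, ∀ i j, lieMet eulerField h t i j = h t i j)
        ∧ (∀ t ∈ M, ∀ i j,
            lieMet eulerField h' t i j = (2 - t 0 * deriv f (t 0) / f (t 0)) * h' t i j))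
    ∧ (∀ t ∈ M, ∀ a : Fin 2,
        bulF h h' eulerField (fun _ => Pi.single 0 1) (fun _ => Pi.single 0 1) t a = 0
        ∧ bulF h h' eulerField (fun _ => Pi.single 0 1) (fun _ => Pi.single 1 1) t a
            = (Pi.single 0 1 : Fin 2 → ℝ) a
        ∧ bulF h h' eulerField (fun _ => Pi.single 1 1) (fun _ => Pi.single 1 1) t a
            = (Pi.single 1 1 : Fin 2 → ℝ) a)
    ∧ (∀ t ∈ M, ∀ a i j,
        lieMul eulerField (bulMul h h' eulerField) t a i j
          = (1 - t 0 * deriv f (t 0) / f (t 0)) * bulMul h h' eulerField t a i j) := by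
  have hW := isWalkerMet_counterexample_left (fun t ht => (hMsub t ht).2) hh
  have hW' := isWalkerMet_counterexample_right hf hf0 hh'
  have hfd (t : Pt 2) (ht : t ∈ M) : DifferentiableAt ℝ f (t 0) :=
    (hf t ht).differentiableAt (by simp)
  have hreg : RegularTriple M h h' eulerField := fun t ht => by
    rw [Tmat_eq_counterexampleT hM hW hW' ht (hfd t ht)]
    exact isUnit_counterexampleT (hMsub t ht).1
  refine ⟨⟨hW.isMetricOn, hW'.isMetricOn, hW.compatible hM hW', hreg⟩,
    ⟨fun t ht => lieMet_eulerField_left hM hW ht,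
      fun t ht => lieMet_eulerField_right hM hW' ht (hfd t ht)⟩,
    fun t ht a => ?_, fun t ht => lieMul_eulerField_bulMul hM hW hW' hfd hreg ht⟩
  simp only [bulF_eq_dualMul hM hW hW' ht (hfd t ht) (hreg t ht)]
  fin_cases a <;> simp [dualMul]

/-- The two-dimensional counterexample: for the pair of metrics with
inverses h⁻¹ = [[0,x],[x,y]], h̃⁻¹ = [[0,f],[f,f]] and E = x∂ₓ + y∂_y, the pair is
compatible and regular, L_E h = h, L_E h̃ = (2 − xf'/f) h̃, the multiplication • is
dx•dx = 0, dx•dy = dx, dy•dy = dy, and L_E(•) = (1 − xf'/f)·• although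
D̃ − D = 1 − xf'/f is non-constant. -/
theorem stmt16 (f : ℝ → ℝ) (hf : ContDiff ℝ (⊤ : ℕ∞) f) (hf0 : ∀ x, f x ≠ 0)
    (hfnc : ¬ ∃ c₀ : ℝ, ∀ x : ℝ, x * deriv f x / f x = c₀)
    (M : Set (Pt 2)) (hMopen : IsOpen M) (hMconn : IsConnected M)
    (hMsub : ∀ t ∈ M, t 0 * deriv f (t 0) / f (t 0) ≠ 1 / 2 ∧ t 0 ≠ 0)
    (hMnc : ¬ ∃ c₀ : ℝ, ∀ t ∈ M, t 0 * deriv f (t 0) / f (t 0) = c₀)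
    (h h' : Met 2)
    (hhdef : ∀ t : Pt 2, h t = (!![0, t 0; t 0, t 1])⁻¹)
    (hh'def : ∀ t : Pt 2, h' t = (!![0, f (t 0); f (t 0), f (t 0)])⁻¹)
    (E : VF 2) (hEdef : ∀ t i, E t i = t i) :
    (IsMetricOn M h ∧ IsMetricOn M h' ∧ Compatible M h h' ∧ RegularTriple M h h' E)
    ∧ ((∀ t ∈ M, ∀ i j, lieMet E h t i j = h t i j)
        ∧ (∀ t ∈ M, ∀ i j,
            lieMet E h' t i j = (2 - t 0 * deriv f (t 0) / f (t 0)) * h' t i j))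
    ∧ (∀ t ∈ M, ∀ a : Fin 2,
        bulF h h' E (fun _ => Pi.single (0 : Fin 2) (1 : ℝ)) (fun _ => Pi.single (0 : Fin 2) (1 : ℝ)) t a = 0
        ∧ bulF h h' E (fun _ => Pi.single (0 : Fin 2) (1 : ℝ)) (fun _ => Pi.single (1 : Fin 2) (1 : ℝ)) t a
            = (Pi.single (0 : Fin 2) (1 : ℝ) : Fin 2 → ℝ) a
        ∧ bulF h h' E (fun _ => Pi.single (1 : Fin 2) (1 : ℝ)) (fun _ => Pi.single (1 : Fin 2) (1 : ℝ)) t a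
            = (Pi.single (1 : Fin 2) (1 : ℝ) : Fin 2 → ℝ) a)
    ∧ (∀ t ∈ M, ∀ a i j,
        lieMul E (bulMul h h' E) t a i j
          = (1 - t 0 * deriv f (t 0) / f (t 0)) * bulMul h h' E t a i j) := by
  obtain rfl : E = eulerField := funext fun t => funext (hEdef t)
  exact stmt16_general hMopen (fun t _ => hf.contDiffAt) (fun t _ => hf0 (t 0)) hMsub
    (fun t _ => hhdef t) fun t _ => hh'def t
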